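/- Universal uncertainty principle (Ozawa's inequality, pure-state operator form): let A, B, N, D be bounded self-adjoint operators on a complex Hilbert space H such that A + N commutes with B + D, and let ψ ∈ H be a unit vector. Then ‖Nψ‖·‖Dψ‖ + ‖Nψ‖·σ(B;ψ) + σ(A;ψ)·‖Dψ‖ ≥ (1/2)·|⟨ψ, (A∘B − B∘A)ψ⟩|. (Here N plays the role of the noise operator of a measurement of A and D the disturbance operator of B; the commutation of A+N with B+D expresses that the meter observable commutes with the disturbed observable.) -/

import Mathlib

open ContinuousLinearMap

/-- The standard deviation of a bounded operator `A` in the vector state `ψ`: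
`σ(A;ψ)² = ‖Aψ‖² − (re⟨ψ, Aψ⟩)²`. -/
noncomputable def stddev {H : Type*} [NormedAddCommGroup H] [InnerProductSpace ℂ H]
    (A : H →L[ℂ] H) (ψ : H) : ℝ :=
  Real.sqrt (‖A ψ‖ ^ 2 - (Complex.re (inner ℂ ψ (A ψ))) ^ 2)

/-!
Expanding the bracket by bilinearity gives `⁅A, B⁆ = ⁅A + N, B + D⁆ - (⁅N, D⁆ + ⁅N, B⁆ + ⁅A, D⁆)`,
and the first bracket has expectation zero. Robertson's uncertainty relation bounds the
expectations of the other three by products of standard deviations: a commutator does not change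
when multiples of the identity are subtracted, so both operators can be centred at their means
before the Cauchy–Schwarz inequality is applied. Finally, the standard deviations of `N` and `D`
are at most `‖N ψ‖` and `‖D ψ‖`.
-/

section RingCommutator

theorem lie_eq_lie_add_add_sub {R : Type*} [NonUnitalNonAssocRing R] (a b n d : R) :
    ⁅a, b⁆ = ⁅a + n, b + d⁆ - (⁅n, d⁆ + ⁅n, b⁆ + ⁅a, d⁆) := by
  simp only [Ring.lie_def, add_mul, mul_add]
  abel

theorem lie_sub_smul_one_sub_smul_one {R A : Type*} [CommRing R] [Ring A] [Algebra R A]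
    (x y : A) (r s : R) : ⁅x - r • (1 : A), y - s • (1 : A)⁆ = ⁅x, y⁆ := by
  simp only [Ring.lie_def, sub_mul, mul_sub, smul_mul_assoc, one_mul, mul_smul_comm, mul_one]
  module

end RingCommutator

section InnerProductSpace

variable {𝕜 E : Type*} [RCLike 𝕜] [SeminormedAddCommGroup E] [InnerProductSpace 𝕜 E]
  {S T : Module.End 𝕜 E}

theorem norm_sub_re_inner_smul_sq (x y : E) :
    ‖y - (RCLike.re (inner 𝕜 x y) : 𝕜) • x‖ ^ 2 =
      ‖y‖ ^ 2 - (2 - ‖x‖ ^ 2) * RCLike.re (inner 𝕜 x y) ^ 2 := by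
  rw [norm_sub_sq (𝕜 := 𝕜), inner_smul_right, RCLike.re_ofReal_mul, inner_re_symm y x, norm_smul,
    RCLike.norm_ofReal, mul_pow, sq_abs]
  ring

theorem norm_inner_lie_apply_le (hS : S.IsSymmetric) (hT : T.IsSymmetric) (x : E) :
    ‖inner 𝕜 x (⁅S, T⁆ x)‖ ≤ 2 * (‖S x‖ * ‖T x‖) :=
  calc ‖inner 𝕜 x (⁅S, T⁆ x)‖ = ‖inner 𝕜 (S x) (T x) - inner 𝕜 (T x) (S x)‖ := by
        rw [Ring.lie_def, LinearMap.sub_apply, Module.End.mul_apply, Module.End.mul_apply,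
          inner_sub_right, ← hS x, ← hT x]
    _ ≤ ‖inner 𝕜 (S x) (T x)‖ + ‖inner 𝕜 (T x) (S x)‖ := norm_sub_le _ _
    _ ≤ ‖S x‖ * ‖T x‖ + ‖T x‖ * ‖S x‖ :=
        add_le_add (norm_inner_le_norm _ _) (norm_inner_le_norm _ _)
    _ = 2 * (‖S x‖ * ‖T x‖) := by ring

theorem norm_inner_lie_apply_le_norm_sub_smul (hS : S.IsSymmetric) (hT : T.IsSymmetric)
    (a b : ℝ) (x : E) :
    ‖inner 𝕜 x (⁅S, T⁆ x)‖ ≤ 2 * (‖S x - (a : 𝕜) • x‖ * ‖T x - (b : 𝕜) • x‖) := by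
  have hSa : (S - (a : 𝕜) • 1).IsSymmetric := hS.sub (.smul (RCLike.conj_ofReal a) .one)
  have hTb : (T - (b : 𝕜) • 1).IsSymmetric := hT.sub (.smul (RCLike.conj_ofReal b) .one)
  simpa [lie_sub_smul_one_sub_smul_one] using norm_inner_lie_apply_le hSa hTb x

end InnerProductSpace

section StandardDeviation

variable {H : Type*} [NormedAddCommGroup H] [InnerProductSpace ℂ H] {ψ : H}

theorem stddev_nonneg (A : H →L[ℂ] H) (ψ : H) : 0 ≤ stddev A ψ :=
  Real.sqrt_nonneg _

theorem stddev_le_norm_apply (A : H →L[ℂ] H) (ψ : H) : stddev A ψ ≤ ‖A ψ‖ :=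
  Real.sqrt_le_iff.mpr ⟨norm_nonneg _, sub_le_self _ (sq_nonneg _)⟩

theorem norm_apply_sub_re_inner_smul_le_stddev (A : H →L[ℂ] H) (hψ : ‖ψ‖ ≤ 1) :
    ‖A ψ - ((inner ℂ ψ (A ψ)).re : ℂ) • ψ‖ ≤ stddev A ψ := by
  have hψ_sq : ‖ψ‖ ^ 2 ≤ 1 := pow_le_one₀ (norm_nonneg ψ) hψ
  refine Real.le_sqrt_of_sq_le ?_
  calc ‖A ψ - ((inner ℂ ψ (A ψ)).re : ℂ) • ψ‖ ^ 2
      = ‖A ψ‖ ^ 2 - (2 - ‖ψ‖ ^ 2) * (inner ℂ ψ (A ψ)).re ^ 2 :=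
        norm_sub_re_inner_smul_sq (𝕜 := ℂ) ψ (A ψ)
    _ ≤ ‖A ψ‖ ^ 2 - (inner ℂ ψ (A ψ)).re ^ 2 :=
        sub_le_sub_left (le_mul_of_one_le_left (sq_nonneg _) (by linarith)) _

theorem robertson_inequality {A B : H →L[ℂ] H} (hA : (A : H →ₗ[ℂ] H).IsSymmetric)
    (hB : (B : H →ₗ[ℂ] H).IsSymmetric) (hψ : ‖ψ‖ ≤ 1) :
    ‖inner ℂ ψ (⁅A, B⁆ ψ)‖ ≤ 2 * (stddev A ψ * stddev B ψ) := by
  refine (norm_inner_lie_apply_le_norm_sub_smul hA hB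
    (inner ℂ ψ (A ψ)).re (inner ℂ ψ (B ψ)).re ψ).trans ?_
  gcongr
  · exact stddev_nonneg A ψ
  · exact norm_apply_sub_re_inner_smul_le_stddev A hψ
  · exact norm_apply_sub_re_inner_smul_le_stddev B hψ

theorem ozawa_inequality_general {A B N D : H →L[ℂ] H}
    (hA : (A : H →ₗ[ℂ] H).IsSymmetric) (hB : (B : H →ₗ[ℂ] H).IsSymmetric)
    (hN : (N : H →ₗ[ℂ] H).IsSymmetric) (hD : (D : H →ₗ[ℂ] H).IsSymmetric)
    (hcomm : inner ℂ ψ (⁅A + N, B + D⁆ ψ) = 0) (hψ : ‖ψ‖ ≤ 1) :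
    (1 / 2) * ‖inner ℂ ψ (⁅A, B⁆ ψ)‖ ≤
      stddev N ψ * stddev D ψ + stddev N ψ * stddev B ψ + stddev A ψ * stddev D ψ := by
  have triangle : ‖inner ℂ ψ (⁅A, B⁆ ψ)‖ ≤
      ‖inner ℂ ψ (⁅N, D⁆ ψ)‖ + ‖inner ℂ ψ (⁅N, B⁆ ψ)‖ + ‖inner ℂ ψ (⁅A, D⁆ ψ)‖ := by
    rw [lie_eq_lie_add_add_sub A B N D, sub_apply, inner_sub_right, hcomm, zero_sub, norm_neg,
      add_apply, add_apply, inner_add_right, inner_add_right]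
    exact norm_add₃_le
  linarith [robertson_inequality hN hD hψ, robertson_inequality hN hB hψ,
    robertson_inequality hA hD hψ]

end StandardDeviation

/-- Universal uncertainty principle (Ozawa's inequality, pure-state operator form). -/
theorem ozawa_inequality {H : Type*} [NormedAddCommGroup H] [InnerProductSpace ℂ H]
    [CompleteSpace H] (A B N D : H →L[ℂ] H)
    (hA : IsSelfAdjoint A) (hB : IsSelfAdjoint B)
    (hN : IsSelfAdjoint N) (hD : IsSelfAdjoint D)
    (hcomm : (A + N) ∘L (B + D) = (B + D) ∘L (A + N))
    (ψ : H) (hψ : ‖ψ‖ = 1) :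
    ‖N ψ‖ * ‖D ψ‖ + ‖N ψ‖ * stddev B ψ + stddev A ψ * ‖D ψ‖ ≥
      (1 / 2) * ‖inner ℂ ψ ((A ∘L B - B ∘L A) ψ)‖ := by
  have hlie : ⁅A + N, B + D⁆ = 0 := sub_eq_zero.mpr hcomm
  refine (ozawa_inequality_general hA.isSymmetric hB.isSymmetric hN.isSymmetric hD.isSymmetric
    (by simp [hlie]) hψ.le).trans ?_
  have hN_le : stddev N ψ ≤ ‖N ψ‖ := stddev_le_norm_apply N ψ
  have hD_le : stddev D ψ ≤ ‖D ψ‖ := stddev_le_norm_apply D ψ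
  gcongr
  exacts [stddev_nonneg D ψ, stddev_nonneg B ψ, stddev_nonneg A ψ]
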